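/- Assume |S₀| < n_T, max_{1≤k≤K} |S_k| < n_S, and that the matrices (X⁽ᵏ⁾_{S_k})ᵀX⁽ᵏ⁾_{S_k} (k ∈ [K]) and X̃_{S₀}ᵀX̃_{S₀} are invertible. Then the β-component of the solution of the oracle problem satisfies β̂_{ora,S₀} = [X̃_{S₀}ᵀX̃_{S₀}]⁻¹ X̃_{S₀}ᵀ y and β̂_{ora,S₀ᶜ} = 0, where y is the vertical stack of y⁽⁰⁾, y⁽¹⁾, …, y⁽ᴷ⁾. -/

import Mathlib

/-!
STATEMENT 1 (Proposition 1): If `|S₀| < n_T`, `max_k |S_k| < n_S`, and the Gram matrices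
`(X⁽ᵏ⁾_{S_k})ᵀX⁽ᵏ⁾_{S_k}` and `X̃_{S₀}ᵀX̃_{S₀}` are invertible, then the `β`-component of any
solution of the oracle problem satisfies
`β̂_{ora,S₀} = [X̃_{S₀}ᵀX̃_{S₀}]⁻¹ X̃_{S₀}ᵀ y` and `β̂_{ora,S₀ᶜ} = 0`,
where `y` is the vertical stack of `y⁽⁰⁾, y⁽¹⁾, …, y⁽ᴷ⁾`, `X̃_{S₀}` is the vertical stack of
`X⁽⁰⁾_{S₀}, X̃⁽¹⁾_{S₀}, …, X̃⁽ᴷ⁾_{S₀}`, with `X̃⁽ᵏ⁾_{S₀} = (I − H⁽ᵏ⁾)X⁽ᵏ⁾_{S₀}` and `H⁽ᵏ⁾` the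
projection onto the column space of `X⁽ᵏ⁾_{S_k}`.
-/

open Matrix Finset

/-- Squared ℓ₂ norm. -/
def sqnorm {n : ℕ} (v : Fin n → ℝ) : ℝ := ∑ i, (v i) ^ 2

/-- The column-submatrix of `A` indexed by the set `S`. -/
noncomputable def colSub {n p : ℕ} (A : Matrix (Fin n) (Fin p) ℝ) (S : Finset (Fin p)) :
    Matrix (Fin n) {j // j ∈ S} ℝ :=
  Matrix.of fun i j => A i (j : Fin p)

/-- The projection matrix `H⁽ᵏ⁾` onto the column space of `X⁽ᵏ⁾_{S_k}`. -/
noncomputable def projMat {nS p : ℕ} (Xk : Matrix (Fin nS) (Fin p) ℝ) (Sk : Finset (Fin p)) :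
    Matrix (Fin nS) (Fin nS) ℝ :=
  colSub Xk Sk * ((colSub Xk Sk)ᵀ * colSub Xk Sk)⁻¹ * (colSub Xk Sk)ᵀ

/-- `X̃⁽ᵏ⁾_{S₀} := (I − H⁽ᵏ⁾)X⁽ᵏ⁾_{S₀}`. -/
noncomputable def Xtilde {nS p : ℕ} (Xk : Matrix (Fin nS) (Fin p) ℝ)
    (S0 Sk : Finset (Fin p)) : Matrix (Fin nS) {j // j ∈ S0} ℝ :=
  (1 - projMat Xk Sk) * colSub Xk S0

/-- Vertical stack of a target block (n_T rows) and `K` source blocks (n_S rows each). -/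
def stackM {K nT nS : ℕ} {q : Type*} (A0 : Matrix (Fin nT) q ℝ)
    (As : Fin K → Matrix (Fin nS) q ℝ) : Matrix (Fin nT ⊕ Fin K × Fin nS) q ℝ :=
  Matrix.of fun i j => Sum.elim (fun a => A0 a j) (fun ki => As ki.1 ki.2 j) i

/-- Vertical stack of a target vector and `K` source vectors. -/
def stackV {K nT nS : ℕ} (v0 : Fin nT → ℝ) (vs : Fin K → Fin nS → ℝ) :
    Fin nT ⊕ Fin K × Fin nS → ℝ :=
  Sum.elim v0 fun ki => vs ki.1 ki.2

/-- `X̃_{S₀}`: the vertical stack of `X⁽⁰⁾_{S₀}, X̃⁽¹⁾_{S₀}, …, X̃⁽ᴷ⁾_{S₀}`. -/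
noncomputable def XtildeStack {K nT nS p : ℕ} (X0 : Matrix (Fin nT) (Fin p) ℝ)
    (Xs : Fin K → Matrix (Fin nS) (Fin p) ℝ) (S0 : Finset (Fin p))
    (Ss : Fin K → Finset (Fin p)) : Matrix (Fin nT ⊕ Fin K × Fin nS) {j // j ∈ S0} ℝ :=
  stackM (colSub X0 S0) fun k => Xtilde (Xs k) S0 (Ss k)

/-- The least-squares objective `(1/N) Σ_{k=0}^K ‖y⁽ᵏ⁾ − X⁽ᵏ⁾(β + δ⁽ᵏ⁾)‖₂²` (with `δ⁽⁰⁾ := 0`). -/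
noncomputable def lsObj {K nT nS p : ℕ} (X0 : Matrix (Fin nT) (Fin p) ℝ)
    (Xs : Fin K → Matrix (Fin nS) (Fin p) ℝ) (y0 : Fin nT → ℝ) (ys : Fin K → Fin nS → ℝ)
    (β : Fin p → ℝ) (d : Fin K → Fin p → ℝ) : ℝ :=
  (1 / (K * nS + nT : ℝ)) *
    (sqnorm (y0 - X0 *ᵥ β) + ∑ k, sqnorm (ys k - Xs k *ᵥ (β + d k)))

/-- The oracle constraints `β_{S₀ᶜ} = 0` and `δ⁽ᵏ⁾_{S_kᶜ} = 0` for all `k`. -/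
def oraFeas {K p : ℕ} (S0 : Finset (Fin p)) (Ss : Fin K → Finset (Fin p))
    (β : Fin p → ℝ) (d : Fin K → Fin p → ℝ) : Prop :=
  (∀ j, j ∉ S0 → β j = 0) ∧ ∀ k, ∀ j, j ∉ Ss k → d k j = 0

/-- Extension by zero of a vector indexed by `S`. -/
noncomputable def extZ {p : ℕ} (S : Finset (Fin p)) (c : {j // j ∈ S} → ℝ) : Fin p → ℝ :=
  fun j => if h : j ∈ S then c ⟨j, h⟩ else 0

lemma mulVec_extZ {n p : ℕ} (A : Matrix (Fin n) (Fin p) ℝ) (S : Finset (Fin p))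
    (c : {j // j ∈ S} → ℝ) : A *ᵥ extZ S c = colSub A S *ᵥ c := by
  funext i
  simp only [mulVec, dotProduct, colSub, Matrix.of_apply]
  rw [← Finset.sum_subset (Finset.subset_univ S)
    (fun j _ hj => by simp [extZ, hj]), ← Finset.sum_coe_sort S]
  refine Finset.sum_congr rfl fun j _ => ?_
  simp [extZ]

lemma eq_extZ {p : ℕ} (S : Finset (Fin p)) (b : Fin p → ℝ) (hb : ∀ j, j ∉ S → b j = 0) :
    b = extZ S (fun j => b j) := by
  funext j
  by_cases h : j ∈ S
  · simp [extZ, h]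
  · simp [extZ, h, hb j h]

lemma sqnorm_eq {n : ℕ} (v : Fin n → ℝ) : sqnorm v = v ⬝ᵥ v := by
  simp [sqnorm, dotProduct, sq]

lemma sqnorm_nonneg' {n : ℕ} (v : Fin n → ℝ) : 0 ≤ sqnorm v :=
  Finset.sum_nonneg fun _ _ => sq_nonneg _

lemma sqnorm_sub_smul {n : ℕ} (v w : Fin n → ℝ) (t : ℝ) :
    sqnorm (v - t • w) = sqnorm v - 2 * t * (v ⬝ᵥ w) + t ^ 2 * sqnorm w := by
  simp only [sqnorm, dotProduct, Finset.mul_sum, ← Finset.sum_sub_distrib,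
    ← Finset.sum_add_distrib]
  refine Finset.sum_congr rfl fun i _ => ?_
  simp only [Pi.sub_apply, Pi.smul_apply, smul_eq_mul]
  ring

lemma lin_zero_of_quad {Q L : ℝ} (hQ : 0 ≤ Q) (h : ∀ t : ℝ, 0 ≤ t ^ 2 * Q - 2 * t * L) :
    L = 0 := by
  have h1 := h (L / (Q + 1))
  have hp : 0 < Q + 1 := by linarith
  have e : (L / (Q + 1)) ^ 2 * Q - 2 * (L / (Q + 1)) * L
      = -(L ^ 2 * (Q + 2)) / (Q + 1) ^ 2 := by
    field_simp
    ring
  rw [e, le_div_iff₀ (by positivity)] at h1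
  have h2 : L ^ 2 = 0 := by nlinarith [sq_nonneg L, mul_nonneg (sq_nonneg L) hQ]
  exact pow_eq_zero_iff (two_ne_zero) |>.1 h2

lemma proj_mul {n p : ℕ} (X : Matrix (Fin n) (Fin p) ℝ) (S : Finset (Fin p))
    (h : IsUnit ((colSub X S)ᵀ * colSub X S).det) : projMat X S * colSub X S = colSub X S := by
  rw [projMat, Matrix.mul_assoc, Matrix.mul_assoc, Matrix.nonsing_inv_mul _ h, Matrix.mul_one]

lemma proj_transpose {n p : ℕ} (X : Matrix (Fin n) (Fin p) ℝ) (S : Finset (Fin p)) :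
    (projMat X S)ᵀ = projMat X S := by
  simp [projMat, Matrix.transpose_mul, Matrix.transpose_nonsing_inv, Matrix.mul_assoc]

lemma proj_idem {n p : ℕ} (X : Matrix (Fin n) (Fin p) ℝ) (S : Finset (Fin p))
    (h : IsUnit ((colSub X S)ᵀ * colSub X S).det) :
    projMat X S * projMat X S = projMat X S := by
  have e : projMat X S
      = colSub X S * (((colSub X S)ᵀ * colSub X S)⁻¹ * (colSub X S)ᵀ) := by
    rw [projMat, Matrix.mul_assoc]
  calc projMat X S * projMat X S
      = (projMat X S * colSub X S) * (((colSub X S)ᵀ * colSub X S)⁻¹ * (colSub X S)ᵀ) := by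
        rw [Matrix.mul_assoc, ← e]
    _ = projMat X S := by rw [proj_mul X S h, ← e]

/-- Residual inner products against `X̃ c`. -/
lemma resid_dot {n p : ℕ} (X : Matrix (Fin n) (Fin p) ℝ) (S0 S : Finset (Fin p))
    (h : IsUnit ((colSub X S)ᵀ * colSub X S).det) (y : Fin n → ℝ)
    (θ c : {j // j ∈ S0} → ℝ) (η : {j // j ∈ S} → ℝ) :
    (y - (colSub X S0 *ᵥ θ + colSub X S *ᵥ η)) ⬝ᵥ (Xtilde X S0 S *ᵥ c)
      = (y - Xtilde X S0 S *ᵥ θ) ⬝ᵥ (Xtilde X S0 S *ᵥ c) := by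
  have hMt : (1 - projMat X S)ᵀ = 1 - projMat X S := by
    rw [Matrix.transpose_sub, proj_transpose, Matrix.transpose_one]
  have key : ∀ v w : Fin n → ℝ, (v ⬝ᵥ ((1 - projMat X S) *ᵥ w))
      = ((1 - projMat X S) *ᵥ v) ⬝ᵥ w := by
    intro v w
    rw [Matrix.dotProduct_mulVec, ← Matrix.mulVec_transpose, hMt]
  have hA : (1 - projMat X S) * colSub X S = 0 := by
    rw [Matrix.sub_mul, proj_mul X S h, Matrix.one_mul, sub_self]
  have hMM : (1 - projMat X S) * (1 - projMat X S) = 1 - projMat X S := by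
    rw [Matrix.mul_sub, Matrix.sub_mul, Matrix.sub_mul, proj_idem X S h]
    simp
  simp only [Xtilde, ← Matrix.mulVec_mulVec]
  rw [key, key]
  congr 1
  simp only [Matrix.mulVec_sub, Matrix.mulVec_add]
  simp only [Matrix.mulVec_mulVec, hA, ← Matrix.mul_assoc, hMM]
  simp

theorem statement_1 {K nT nS p : ℕ}
    (X0 : Matrix (Fin nT) (Fin p) ℝ) (Xs : Fin K → Matrix (Fin nS) (Fin p) ℝ)
    (β0 : Fin p → ℝ) (δ : Fin K → Fin p → ℝ)
    (e0 : Fin nT → ℝ) (es : Fin K → Fin nS → ℝ)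
    (y0 : Fin nT → ℝ) (ys : Fin K → Fin nS → ℝ)
    (hy0 : y0 = X0 *ᵥ β0 + e0) (hys : ∀ k, ys k = Xs k *ᵥ (β0 + δ k) + es k)
    (S0 : Finset (Fin p)) (Ss : Fin K → Finset (Fin p))
    (hS0 : ∀ j, j ∈ S0 ↔ β0 j ≠ 0) (hSs : ∀ k j, j ∈ Ss k ↔ δ k j ≠ 0)
    (hcard0 : S0.card < nT) (hcards : ∀ k, (Ss k).card < nS)
    (hinvk : ∀ k, IsUnit ((colSub (Xs k) (Ss k))ᵀ * colSub (Xs k) (Ss k)).det)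
    (hinvt : IsUnit ((XtildeStack X0 Xs S0 Ss)ᵀ * XtildeStack X0 Xs S0 Ss).det)
    (βhat : Fin p → ℝ) (dhat : Fin K → Fin p → ℝ)
    (hfeas : oraFeas S0 Ss βhat dhat)
    (hmin : ∀ (β' : Fin p → ℝ) (d' : Fin K → Fin p → ℝ), oraFeas S0 Ss β' d' →
      lsObj X0 Xs y0 ys βhat dhat ≤ lsObj X0 Xs y0 ys β' d') :
    (∀ j (hj : j ∈ S0),
      βhat j = ((((XtildeStack X0 Xs S0 Ss)ᵀ * XtildeStack X0 Xs S0 Ss)⁻¹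
          * (XtildeStack X0 Xs S0 Ss)ᵀ) *ᵥ stackV y0 ys) ⟨j, hj⟩) ∧
    (∀ j, j ∉ S0 → βhat j = 0) := by
  refine ⟨?_, hfeas.1⟩
  set Z := XtildeStack X0 Xs S0 Ss with hZ
  set θ : {j // j ∈ S0} → ℝ := fun j => βhat j with hθ
  have hβ : βhat = extZ S0 θ := eq_extZ S0 βhat hfeas.1
  have hd : ∀ k, dhat k = extZ (Ss k) (fun j => dhat k j) :=
    fun k => eq_extZ (Ss k) (dhat k) (hfeas.2 k)
  have hN : (0 : ℝ) < 1 / (K * nS + nT : ℝ) := by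
    have : (0 : ℝ) < nT := by exact_mod_cast lt_of_le_of_lt (Nat.zero_le _) hcard0
    positivity
  -- stationarity along the profiled directions
  have hstat : ∀ c : {j // j ∈ S0} → ℝ, (stackV y0 ys - Z *ᵥ θ) ⬝ᵥ (Z *ᵥ c) = 0 := by
    intro c
    let g : ∀ k, {j // j ∈ Ss k} → ℝ := fun k =>
      -((((colSub (Xs k) (Ss k))ᵀ * colSub (Xs k) (Ss k))⁻¹ * (colSub (Xs k) (Ss k))ᵀ)
        *ᵥ (colSub (Xs k) S0 *ᵥ c))
    have hdir : ∀ k, Xs k *ᵥ (extZ S0 c + extZ (Ss k) (g k)) = Xtilde (Xs k) S0 (Ss k) *ᵥ c := by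
      intro k
      rw [Matrix.mulVec_add, mulVec_extZ, mulVec_extZ, Xtilde, ← Matrix.mulVec_mulVec,
        Matrix.sub_mulVec, Matrix.one_mulVec, projMat]
      simp only [g, Matrix.mulVec_neg, Matrix.mulVec_mulVec, Matrix.mul_assoc, sub_eq_add_neg]
    have hL : (y0 - X0 *ᵥ βhat) ⬝ᵥ (colSub X0 S0 *ᵥ c)
        + ∑ k, (ys k - Xs k *ᵥ (βhat + dhat k)) ⬝ᵥ (Xtilde (Xs k) S0 (Ss k) *ᵥ c) = 0 := by
      refine lin_zero_of_quad (Q := sqnorm (colSub X0 S0 *ᵥ c)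
        + ∑ k, sqnorm (Xtilde (Xs k) S0 (Ss k) *ᵥ c)) ?_ ?_
      · exact add_nonneg (sqnorm_nonneg' _) (Finset.sum_nonneg fun k _ => sqnorm_nonneg' _)
      · intro t
        have hm := hmin (βhat + t • extZ S0 c) (fun k => dhat k + t • extZ (Ss k) (g k)) ⟨?_, ?_⟩
        · have h0 : y0 - X0 *ᵥ (βhat + t • extZ S0 c)
              = (y0 - X0 *ᵥ βhat) - t • (colSub X0 S0 *ᵥ c) := by
            rw [Matrix.mulVec_add, Matrix.mulVec_smul, mulVec_extZ, sub_add_eq_sub_sub]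
          have hk : ∀ k, ys k - Xs k *ᵥ ((βhat + t • extZ S0 c) + (dhat k + t • extZ (Ss k) (g k)))
              = (ys k - Xs k *ᵥ (βhat + dhat k)) - t • (Xtilde (Xs k) S0 (Ss k) *ᵥ c) := by
            intro k
            rw [add_add_add_comm, ← smul_add, Matrix.mulVec_add, Matrix.mulVec_smul, hdir,
              sub_add_eq_sub_sub]
          unfold lsObj at hm
          have hm2 := le_of_mul_le_mul_left hm hN
          simp only [h0, hk, sqnorm_sub_smul, Finset.sum_add_distrib, Finset.sum_sub_distrib,
            ← Finset.mul_sum] at hm2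
          linarith
        · intro j hj
          simp [hfeas.1 j hj, extZ, hj]
        · intro k j hj
          simp [hfeas.2 k j hj, extZ, hj]
    have hk : ∀ k, (ys k - Xs k *ᵥ (βhat + dhat k)) ⬝ᵥ (Xtilde (Xs k) S0 (Ss k) *ᵥ c)
        = (ys k - Xtilde (Xs k) S0 (Ss k) *ᵥ θ) ⬝ᵥ (Xtilde (Xs k) S0 (Ss k) *ᵥ c) := by
      intro k
      rw [← resid_dot (Xs k) S0 (Ss k) (hinvk k) (ys k) θ c (fun j => dhat k j),
        ← mulVec_extZ, ← mulVec_extZ, ← hβ, ← hd k, Matrix.mulVec_add]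
    simp only [hk] at hL
    rw [hβ, mulVec_extZ] at hL
    rw [← hL]
    simp only [dotProduct, Fintype.sum_sum_type, Fintype.sum_prod_type]
    rfl
  have hnorm : Zᵀ *ᵥ (stackV y0 ys - Z *ᵥ θ) = 0 := by
    refine dotProduct_eq_zero _ fun c => ?_
    rw [← hstat c, Matrix.dotProduct_mulVec, Matrix.mulVec_transpose]
  have hfin : θ = ((Zᵀ * Z)⁻¹ * Zᵀ) *ᵥ stackV y0 ys := by
    rw [Matrix.mulVec_sub, sub_eq_zero] at hnorm
    rw [← Matrix.mulVec_mulVec, hnorm, Matrix.mulVec_mulVec, Matrix.mulVec_mulVec,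
      Matrix.mul_assoc, Matrix.nonsing_inv_mul _ hinvt, Matrix.one_mulVec]
  intro j hj
  exact congrFun hfin ⟨j, hj⟩
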